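/- Prism decomposition normality: let Q₀ ⊂ ℝ² be a smooth lattice polygon and Q₁ a lattice polygon whose normal fan is refined by that of Q₀, with Q₁ ⊆ Q₀ after a common choice of support; then every lattice point of the polytope P = Conv{Q₀×{0}, Q₁×{1}} ⊂ ℝ³ at height t (0 ≤ t ≤ 1 not integral this makes sense only for dilates): for every n ≥ 1 and every lattice point (u, j) ∈ nP ∩ ℤ³ with 0 ≤ j ≤ n, one can write (u,j) as a sum of j lattice points of Q₁×{1} and (n−j) lattice points of Q₀×{0}. -/

import Mathlib

open scoped Pointwise

def IsLatticePt {d : ℕ} (x : Fin d → ℝ) : Prop := ∀ i, ∃ z : ℤ, x i = (z : ℝ)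

def IsLatticePolytope {d : ℕ} (P : Set (Fin d → ℝ)) : Prop :=
  ∃ V : Finset (Fin d → ℝ), V.Nonempty ∧ (∀ v ∈ V, IsLatticePt v) ∧ P = convexHull ℝ ↑V

def IsNormalPolytope {d : ℕ} (P : Set (Fin d → ℝ)) : Prop :=
  ∀ n : ℕ, 1 ≤ n → ∀ x ∈ (n : ℝ) • P, IsLatticePt x →
    ∃ f : Fin n → (Fin d → ℝ), (∀ i, f i ∈ P ∧ IsLatticePt (f i)) ∧ x = ∑ i, f i

def P1 : Set (Fin 3 → ℝ) := convexHull ℝ {![0,0,0], ![1,0,0], ![0,1,0], ![0,0,1]}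

def dot2 (x y : Fin 2 → ℝ) : ℝ := ∑ i, x i * y i

def normalCone (P : Set (Fin 2 → ℝ)) (u : Fin 2 → ℝ) : Set (Fin 2 → ℝ) :=
  {y | ∀ x ∈ P, dot2 x y ≤ dot2 u y}

/-- The normal fan of `A` refines the normal fan of `B`: every normal cone of `A`
is contained in some normal cone of `B`. -/
def FanRefines (A B : Set (Fin 2 → ℝ)) : Prop :=
  ∀ u ∈ A, ∃ v ∈ B, normalCone A u ⊆ normalCone B v

/-- At every vertex the primitive edge directions form a ℤ-basis of ℤ². -/
def IsSmoothPolygon (F : Set (Fin 2 → ℝ)) : Prop :=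
  ∀ u ∈ Set.extremePoints ℝ F, ∃ m₁ m₂ : Fin 2 → ℤ,
    (m₁ 0 * m₂ 1 - m₁ 1 * m₂ 0 = 1 ∨ m₁ 0 * m₂ 1 - m₁ 1 * m₂ 0 = -1) ∧
    {y : Fin 2 → ℝ | ∃ t : ℝ, ∃ x ∈ F, 0 ≤ t ∧ y = t • (x - u)} =
      {y : Fin 2 → ℝ | ∃ a b : ℝ, 0 ≤ a ∧ 0 ≤ b ∧
        y = a • (fun i => (m₁ i : ℝ)) + b • (fun i => (m₂ i : ℝ))}

def emb (v : Fin 2 → ℝ) (t : ℝ) : Fin 3 → ℝ := ![v 0, v 1, t]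

def cayley (F G : Set (Fin 2 → ℝ)) : Set (Fin 3 → ℝ) :=
  convexHull ℝ ((fun v => emb v 0) '' F ∪ (fun v => emb v 1) '' G)

/-!
A lattice point `x` splits into lattice points of `P` and `Q` as soon as `P` meets `R = x - Q` in a
lattice point. Suppose that `P ∩ R` is nonempty but lattice-free. Every lattice point of
`conv (P ∪ R)` then lies in a half-plane missing `P` or in one missing `R`, and the parity argument
behind Doignon's integer Helly theorem leaves four of these half-planes that still cover all these
lattice points. No single half-plane covers the lattice points of `P`, or those of `R`, so exactly
two of the four miss `R` and cover the lattice points of `P`. Each can be taken to be bounded,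
up to translation, by the line through an edge of `R`; since the fan of `P` refines that of `Q`, the
polygon `P` has an edge parallel to this line on its uncovered side, hence of at least one lattice
length, while the line itself runs through `P` strictly between two consecutive lattice points.
Thus `P` narrows across both lines, and comparing chords shows that two such half-planes always
leave a lattice endpoint of one of the two edges of `P` uncovered.
-/

namespace IsLatticePt

variable {d : ℕ} {x y : Fin d → ℝ}

lemma add (hx : IsLatticePt x) (hy : IsLatticePt y) : IsLatticePt (x + y) := fun i ↦ by
  obtain ⟨⟨a, ha⟩, b, hb⟩ := hx i, hy i
  exact ⟨a + b, by simp [ha, hb]⟩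

lemma neg (hx : IsLatticePt x) : IsLatticePt (-x) := fun i ↦ by
  obtain ⟨a, ha⟩ := hx i
  exact ⟨-a, by simp [ha]⟩

lemma sub (hx : IsLatticePt x) (hy : IsLatticePt y) : IsLatticePt (x - y) := by
  simpa only [sub_eq_add_neg] using hx.add hy.neg

lemma zsmul (hx : IsLatticePt x) (k : ℤ) : IsLatticePt (k • x) := fun i ↦ by
  obtain ⟨a, ha⟩ := hx i
  exact ⟨k * a, by simp [ha]⟩

lemma finite_of_isBounded {A : Set (Fin d → ℝ)} (hA : Bornology.IsBounded A) :
    {x ∈ A | IsLatticePt x}.Finite := by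
  obtain ⟨R, hR⟩ := hA.subset_closedBall 0
  refine ((Set.finite_Icc (fun _ : Fin d ↦ ⌈-R⌉) fun _ ↦ ⌊R⌋).image
    fun z i ↦ (z i : ℝ)).subset fun x ⟨hxA, hx⟩ ↦ ?_
  choose z hz using hx
  have hbound i : -R ≤ z i ∧ z i ≤ R := by
    rw [← hz i, ← abs_le, ← Real.norm_eq_abs]
    exact (norm_le_pi_norm x i).trans (mem_closedBall_zero_iff.1 (hR hxA))
  exact ⟨z, ⟨fun i ↦ Int.ceil_le.2 (hbound i).1, fun i ↦ Int.le_floor.2 (hbound i).2⟩,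
    (funext hz).symm⟩

lemma exists_midpoint_of_card_lt {T : Finset (Fin d → ℝ)} (hT : ∀ x ∈ T, IsLatticePt x)
    (hcard : 2 ^ d < T.card) : ∃ x ∈ T, ∃ y ∈ T, x ≠ y ∧ IsLatticePt (midpoint ℝ x y) := by
  choose! z hz using hT
  have hparity : (Finset.univ : Finset (Fin d → ZMod 2)).card < T.card := by simpa
  obtain ⟨x, hx, y, hy, hxy, heq⟩ := Finset.exists_ne_map_eq_of_card_lt_of_maps_to hparity
    (f := fun x i ↦ (z x i : ZMod 2)) fun _ _ ↦ Finset.mem_univ _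
  refine ⟨x, hx, y, hy, hxy, fun i ↦ ?_⟩
  obtain ⟨k, hk⟩ := (ZMod.intCast_eq_intCast_iff_dvd_sub _ _ 2).1 (congrFun heq i)
  have hk' : (z y i : ℝ) = z x i + 2 * k := by rw [eq_add_of_sub_eq' hk]; push_cast; ring
  exact ⟨z x i + k, by simp [midpoint_eq_smul_add, hz x hx i, hz y hy i, hk']; ring⟩

lemma exists_primitive_smul {e : Fin d → ℝ} (he : IsLatticePt e) (he0 : e ≠ 0) :
    ∃ c : ℝ, 0 < c ∧ c ≤ 1 ∧ IsLatticePt (c • e) ∧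
      ∀ t : ℝ, IsLatticePt (t • e) → ∃ k : ℤ, t = k * c := by
  let H : AddSubgroup ℝ :=
    { carrier := {t | IsLatticePt (t • e)}
      zero_mem' := by simpa using he.zsmul 0
      add_mem' := fun ha hb ↦ by simpa only [Set.mem_ofPred_eq, add_smul] using ha.add hb
      neg_mem' := fun ha ↦ by simpa only [Set.mem_ofPred_eq, neg_smul] using ha.neg }
  have h1 : (1 : ℝ) ∈ H := by simpa [H] using he
  obtain ⟨i, hi⟩ := Function.ne_iff.1 he0
  have hei : 0 < |e i| := abs_pos.2 hi
  have hgap : Disjoint (H : Set ℝ) (Set.Ioo 0 |e i|⁻¹) := by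
    refine Set.disjoint_left.2 fun t ht ⟨ht0, ht1⟩ ↦ ?_
    obtain ⟨z, hz⟩ := ht i
    have habs : |(z : ℝ)| = t * |e i| := by rw [← hz]; simp [abs_mul, abs_of_pos ht0]
    have hlt : |z| < 1 := by
      have : |(z : ℝ)| < 1 := by rwa [habs, ← lt_div_iff₀ hei, one_div]
      exact_mod_cast this
    have hpos : 0 < |z| := by
      have : 0 < |(z : ℝ)| := by rw [habs]; positivity
      exact_mod_cast this
    omega
  obtain ⟨c, hc⟩ := AddSubgroup.exists_isLeast_pos
    (fun h ↦ one_ne_zero (α := ℝ) (by simp [h] at h1)) (inv_pos.2 hei) hgap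
  refine ⟨c, hc.1.2, hc.2 ⟨h1, one_pos⟩, hc.1.1, fun t ht ↦ ?_⟩
  have htH : t ∈ H := ht
  rw [AddSubgroup.cyclic_of_min hc, AddSubgroup.mem_closure_singleton] at htH
  obtain ⟨k, rfl⟩ := htH
  exact ⟨k, by simp⟩

end IsLatticePt

section IntegerHelly

variable {α ι E : Type*}

-- The levels are raised one at a time, each to the least value of `f k` on the points that only
-- the `k`-th constraint covers.
lemma exists_tight_levels {R : Type*} [LinearOrder R] {S : Finset α} {J : Finset ι}
    {f : ι → α → R} {b : ι → R} (hcov : ∀ z ∈ S, ∃ i ∈ J, b i ≤ f i z)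
    (hmin : ∀ i ∈ J, ∃ z ∈ S, ∀ j ∈ J, j ≠ i → f j z < b j) :
    ∃ c : ι → R, (∀ z ∈ S, ∃ i ∈ J, c i ≤ f i z) ∧
      ∀ i ∈ J, ∃ z ∈ S, f i z = c i ∧ ∀ j ∈ J, j ≠ i → f j z < c j := by
  classical
  suffices h : ∀ K ⊆ J, ∃ c : ι → R, b ≤ c ∧ (∀ z ∈ S, ∃ i ∈ J, c i ≤ f i z) ∧
      ∀ i ∈ K, ∃ z ∈ S, f i z = c i ∧ ∀ j ∈ J, j ≠ i → f j z < c j by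
    obtain ⟨c, -, hc⟩ := h J subset_rfl
    exact ⟨c, hc⟩
  intro K
  induction K using Finset.induction_on with
  | empty => exact fun _ ↦ ⟨b, le_rfl, hcov, by simp⟩
  | insert k K hkK ih =>
    intro hKJ
    obtain ⟨hkJ, hKJ⟩ := Finset.insert_subset_iff.1 hKJ
    obtain ⟨c, hbc, hcov, htight⟩ := ih hKJ
    let Sk := {z ∈ S | ∀ j ∈ J, j ≠ k → f j z < c j}
    have hSk : Sk.Nonempty := by
      obtain ⟨z, hzS, hz⟩ := hmin k hkJ
      exact ⟨z, Finset.mem_filter.2 ⟨hzS, fun j hj hjk ↦ (hz j hj hjk).trans_le (hbc j)⟩⟩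
    obtain ⟨zk, hzk, hzk_min⟩ := Sk.exists_min_image (f k) hSk
    obtain ⟨hzkS, hzk⟩ := Finset.mem_filter.1 hzk
    let c' := Function.update c k (f k zk)
    have hc'k : c' k = f k zk := Function.update_self ..
    have hc' {j} (hj : j ≠ k) : c' j = c j := Function.update_of_ne hj ..
    have hcc' : c ≤ c' := by
      refine le_update_iff.2 ⟨?_, fun _ _ ↦ le_rfl⟩
      obtain ⟨i, hi, hci⟩ := hcov zk hzkS
      obtain rfl : i = k := of_not_not fun hik ↦ (hzk i hi hik).not_ge hci
      exact hci
    refine ⟨c', hbc.trans hcc', fun z hz ↦ ?_, fun i hi ↦ ?_⟩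
    · by_cases hzk' : ∀ j ∈ J, j ≠ k → f j z < c j
      · exact ⟨k, hkJ, hc'k ▸ hzk_min z (Finset.mem_filter.2 ⟨hz, hzk'⟩)⟩
      · push Not at hzk'
        obtain ⟨j, hj, hjk, hcj⟩ := hzk'
        exact ⟨j, hj, hc' hjk ▸ hcj⟩
    · obtain rfl | hiK := Finset.mem_insert.1 hi
      · exact ⟨zk, hzkS, hc'k.symm, fun j hj hji ↦ hc' hji ▸ hzk j hj hji⟩
      · obtain ⟨z, hz, hzi, hzj⟩ := htight i hiK
        exact ⟨z, hz, hc' (ne_of_mem_of_not_mem hiK hkK) ▸ hzi,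
          fun j hj hji ↦ (hzj j hj hji).trans_le (hcc' j)⟩

-- At the midpoint of two tight witnesses, every functional lies strictly below its level.
theorem exists_subcover_card_le [AddCommGroup E] [Module ℝ E] {S : Finset E} {k : ℕ}
    (hS : ∀ T ⊆ S, k < T.card → ∃ x ∈ T, ∃ y ∈ T, x ≠ y ∧ midpoint ℝ x y ∈ S)
    {I : Finset ι} {φ : ι → E →ₗ[ℝ] ℝ} {b : ι → ℝ} (hcov : ∀ z ∈ S, ∃ i ∈ I, b i ≤ φ i z) :
    ∃ J ⊆ I, J.card ≤ k ∧ ∀ z ∈ S, ∃ i ∈ J, b i ≤ φ i z := by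
  classical
  obtain ⟨J, hJI, hJ⟩ :=
    exists_minimal_le_of_wellFoundedLT (fun J ↦ ∀ z ∈ S, ∃ i ∈ J, b i ≤ φ i z) I hcov
  refine ⟨J, hJI, not_lt.1 fun hk ↦ ?_, hJ.prop⟩
  have hmin : ∀ i ∈ J, ∃ z ∈ S, ∀ j ∈ J, j ≠ i → φ j z < b j := fun i hi ↦ by
    simpa [imp.swap] using hJ.not_prop_of_lt (Finset.erase_ssubset hi)
  obtain ⟨c, hcov, htight⟩ := exists_tight_levels hJ.prop hmin
  choose! x hxS hxc hxlt using htight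
  have hx_le {i l} (hi : i ∈ J) (hl : l ∈ J) : φ l (x i) ≤ c l := by
    obtain rfl | hli := eq_or_ne l i
    exacts [(hxc l hl).le, (hxlt i hi l hl hli).le]
  have hinj : Set.InjOn x J := fun i hi j hj hij ↦ of_not_not fun hne ↦
    (hxlt j hj i hi hne).ne (hij ▸ hxc i hi)
  obtain ⟨_, hxi, _, hxj, hne, hmid⟩ := hS (J.image x) (Finset.image_subset_iff.2 hxS)
    (by rwa [Finset.card_image_of_injOn hinj])
  obtain ⟨i, hi, rfl⟩ := Finset.mem_image.1 hxi
  obtain ⟨j, hj, rfl⟩ := Finset.mem_image.1 hxj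
  obtain ⟨l, hl, hcl⟩ := hcov _ hmid
  have hval : φ l (midpoint ℝ (x i) (x j)) = (φ l (x i) + φ l (x j)) / 2 := by
    simp [midpoint_eq_smul_add]; ring
  have hlt : φ l (x i) < c l ∨ φ l (x j) < c l := by
    obtain rfl | hli := eq_or_ne l i
    · exact .inr (hxlt j hj l hl (ne_of_apply_ne x hne))
    · exact .inl (hxlt i hi l hl hli)
  rcases hlt with hlt | hlt <;> linarith [hx_le hi hl, hx_le hj hl]

end IntegerHelly

lemma toExposed_nonempty_of_isCompact {E : Type*} [TopologicalSpace E] [AddCommGroup E] [Module ℝ E]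
    {A : Set E} (hA : IsCompact A) (hne : A.Nonempty) (φ : StrongDual ℝ E) :
    (φ.toExposed A).Nonempty := by
  obtain ⟨x, hx, hmax⟩ := hA.exists_isMaxOn hne φ.continuous.continuousOn
  exact ⟨x, hx, fun y hy ↦ hmax hy⟩

namespace IsLatticePolytope

variable {d : ℕ} {P Q F : Set (Fin d → ℝ)} {x : Fin d → ℝ}

lemma convex (hP : IsLatticePolytope P) : Convex ℝ P := by
  obtain ⟨V, -, -, rfl⟩ := hP
  exact convex_convexHull ℝ _

lemma isCompact (hP : IsLatticePolytope P) : IsCompact P := by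
  obtain ⟨V, -, -, rfl⟩ := hP
  exact V.finite_toSet.isCompact_convexHull ℝ

lemma nonempty (hP : IsLatticePolytope P) : P.Nonempty := by
  obtain ⟨V, hV, -, rfl⟩ := hP
  exact convexHull_nonempty_iff.2 hV

lemma singleton (hx : IsLatticePt x) : IsLatticePolytope {x} :=
  ⟨{x}, by simp, by simpa, by simp⟩

lemma add (hP : IsLatticePolytope P) (hQ : IsLatticePolytope Q) : IsLatticePolytope (P + Q) := by
  classical
  obtain ⟨V, hV, hVlat, rfl⟩ := hP
  obtain ⟨W, hW, hWlat, rfl⟩ := hQ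
  refine ⟨V + W, hV.add hW, fun x hx ↦ ?_, by rw [Finset.coe_add, convexHull_add]⟩
  obtain ⟨v, hv, w, hw, rfl⟩ := Finset.mem_add.1 hx
  exact (hVlat v hv).add (hWlat w hw)

lemma sub (hP : IsLatticePolytope P) (hQ : IsLatticePolytope Q) : IsLatticePolytope (P - Q) := by
  classical
  obtain ⟨V, hV, hVlat, rfl⟩ := hP
  obtain ⟨W, hW, hWlat, rfl⟩ := hQ
  refine ⟨V - W, hV.sub hW, fun x hx ↦ ?_, by rw [Finset.coe_sub, convexHull_sub]⟩
  obtain ⟨v, hv, w, hw, rfl⟩ := Finset.mem_sub.1 hx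
  exact (hVlat v hv).sub (hWlat w hw)

lemma natCast_smul (hP : IsLatticePolytope P) (k : ℕ) : IsLatticePolytope ((k : ℝ) • P) := by
  classical
  obtain ⟨V, hV, hVlat, rfl⟩ := hP
  refine ⟨(k : ℝ) • V, hV.smul_finset, fun x hx ↦ ?_,
    by rw [Finset.coe_smul_finset, convexHull_smul]⟩
  obtain ⟨v, hv, rfl⟩ := Finset.mem_smul_finset.1 hx
  simpa only [natCast_zsmul, Nat.cast_smul_eq_nsmul] using (hVlat v hv).zsmul k

lemma isLatticePt_of_mem_extremePoints (hP : IsLatticePolytope P) (hx : x ∈ P.extremePoints ℝ) :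
    IsLatticePt x := by
  obtain ⟨V, -, hV, rfl⟩ := hP
  exact hV x (extremePoints_convexHull_subset hx)

lemma exists_isLatticePt_of_isExtreme (hP : IsLatticePolytope P) (hF : IsExtreme ℝ P F)
    (hFc : IsCompact F) (hne : F.Nonempty) : ∃ e ∈ F, IsLatticePt e := by
  obtain ⟨e, he⟩ := hFc.extremePoints_nonempty hne
  exact ⟨e, he.1, hP.isLatticePt_of_mem_extremePoints (hF.extremePoints_subset_extremePoints he)⟩

lemma exists_isLatticePt_mem_toExposed (hP : IsLatticePolytope P)
    (φ : StrongDual ℝ (Fin d → ℝ)) : ∃ e ∈ φ.toExposed P, IsLatticePt e :=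
  have hexp : IsExposed ℝ P (φ.toExposed P) := ContinuousLinearMap.toExposed.isExposed
  hP.exists_isLatticePt_of_isExtreme hexp.isExtreme (hexp.isCompact hP.isCompact)
    (toExposed_nonempty_of_isCompact hP.isCompact hP.nonempty φ)

lemma exists_ne_isLatticePt_of_isExtreme (hP : IsLatticePolytope P) (hF : IsExtreme ℝ P F)
    (hFc : IsCompact F) (hne : F.Nontrivial) :
    ∃ a ∈ F, ∃ b ∈ F, a ≠ b ∧ IsLatticePt a ∧ IsLatticePt b := by
  obtain ⟨p, hp, q, hq, hpq⟩ := hne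
  obtain ⟨ψ, hψ⟩ := geometric_hahn_banach_point_point hpq
  have hface (ψ : StrongDual ℝ (Fin d → ℝ)) : ∃ e ∈ ψ.toExposed F, IsLatticePt e :=
    hP.exists_isLatticePt_of_isExtreme
      (hF.trans ContinuousLinearMap.toExposed.isExposed.isExtreme)
      (ContinuousLinearMap.toExposed.isExposed.isCompact hFc)
      (toExposed_nonempty_of_isCompact hFc ⟨p, hp⟩ ψ)
  obtain ⟨a, ⟨haF, ha_min⟩, ha⟩ := hface (-ψ)
  obtain ⟨b, ⟨hbF, hb_max⟩, hb⟩ := hface ψ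
  refine ⟨a, haF, b, hbF, ?_, ha, hb⟩
  rintro rfl
  have hle : ψ a ≤ ψ p := by simpa using ha_min p hp
  exact (hle.trans_lt hψ).not_ge (hb_max q hq)

end IsLatticePolytope

lemma exists_eq_dot2 (φ : StrongDual ℝ (Fin 2 → ℝ)) : ∃ y, ∀ x, φ x = dot2 x y :=
  ⟨fun i ↦ φ (Pi.single i 1), fun x ↦ by
    conv_lhs => rw [← Finset.univ_sum_single x, map_sum]
    refine Finset.sum_congr rfl fun i _ ↦ ?_
    rw [← smul_eq_mul, ← map_smul, ← Pi.single_smul, smul_eq_mul, mul_one]⟩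

lemma dot2_eq_dotProduct (x y : Fin 2 → ℝ) : dot2 x y = x ⬝ᵥ y := rfl

lemma normalCone_convexHull_mem_nhds {V : Finset (Fin 2 → ℝ)} {p y : Fin 2 → ℝ}
    (hp : ∀ x ∈ V, x ≠ p → dot2 x y < dot2 p y) :
    normalCone (convexHull ℝ V) p ∈ nhds y := by
  have hcont (x : Fin 2 → ℝ) : Continuous (dot2 x) := continuous_finsetSum _ (by fun_prop)
  have hV : ∀ᶠ y' in nhds y, ∀ x ∈ V, dot2 x y' ≤ dot2 p y' := by
    refine (Filter.eventually_all_finset V).2 fun x hx ↦ ?_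
    obtain rfl | hxp := eq_or_ne x p
    · exact .of_forall fun _ ↦ le_rfl
    · exact ((hcont x).continuousAt.eventually_lt (hcont p).continuousAt (hp x hx hxp)).mono
        fun _ ↦ le_of_lt
  filter_upwards [hV] with y' hy'
  have hlin : IsLinearMap ℝ (dot2 · y') :=
    ⟨fun a b ↦ add_dotProduct a b y', fun c a ↦ smul_dotProduct c a y'⟩
  exact convexHull_min hy' (convex_halfSpace_le hlin _)

namespace FanRefines

variable {P Q : Set (Fin 2 → ℝ)}

lemma refl (P : Set (Fin 2 → ℝ)) : FanRefines P P := fun u hu ↦ ⟨u, hu, subset_rfl⟩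

lemma add_right (h : FanRefines P Q) (R : Set (Fin 2 → ℝ)) : FanRefines (P + R) Q := by
  rintro _ ⟨u, hu, r, hr, rfl⟩
  obtain ⟨v, hv, hsub⟩ := h u hu
  refine ⟨v, hv, fun y hy ↦ hsub fun x hx ↦ ?_⟩
  simpa [dot2_eq_dotProduct] using hy (x + r) (Set.add_mem_add hx hr)

lemma smul_left (h : FanRefines P Q) {c : ℝ} (hc : 0 < c) : FanRefines (c • P) Q := by
  rintro _ ⟨u, hu, rfl⟩
  obtain ⟨v, hv, hsub⟩ := h u hu
  refine ⟨v, hv, fun y hy ↦ hsub fun x hx ↦ ?_⟩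
  simpa [dot2_eq_dotProduct, hc] using hy (c • x) (Set.smul_mem_smul_set hx)

-- If `φ` exposed a single vertex of `P`, its normal cone would be a neighbourhood of `φ`, so all
-- functionals near `φ` would attain their maximum over `Q` at one common point.
lemma nontrivial_toExposed (h : FanRefines P Q) (hP : IsLatticePolytope P)
    {φ : StrongDual ℝ (Fin 2 → ℝ)} (hQ : (φ.toExposed Q).Nontrivial) :
    (φ.toExposed P).Nontrivial := by
  by_contra hsub
  rw [Set.not_nontrivial_iff] at hsub
  obtain ⟨p, hpP, hp⟩ := toExposed_nonempty_of_isCompact hP.isCompact hP.nonempty φ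
  obtain ⟨y, hy⟩ := exists_eq_dot2 φ
  obtain ⟨v, hvQ, hcone⟩ := h p hpP
  obtain ⟨V, -, -, rfl⟩ := hP
  have hlt : ∀ x ∈ V, x ≠ p → dot2 x y < dot2 p y := fun x hx hxp ↦ by
    have hxP := subset_convexHull ℝ _ hx
    rw [← hy, ← hy]
    refine (hp x hxP).lt_of_ne fun heq ↦ hxp (hsub ⟨hxP, ?_⟩ ⟨hpP, hp⟩)
    rwa [heq]
  obtain ⟨w, ⟨hwQ, hw⟩, w', ⟨hw'Q, hw'⟩, hne⟩ := hQ
  have hcone_nhds : ∀ᶠ t in nhds (0 : ℝ), y + t • (w' - w) ∈ normalCone Q v := by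
    have hcont : Continuous fun t : ℝ ↦ y + t • (w' - w) := by fun_prop
    refine (hcont.tendsto' 0 y (by simp)).eventually ?_
    exact Filter.mem_of_superset (normalCone_convexHull_mem_nhds hlt) hcone
  have hcone_nhds_neg := (continuous_neg.tendsto' (0 : ℝ) 0 neg_zero).eventually hcone_nhds
  obtain ⟨t, ⟨ht, ht'⟩, ht0⟩ := (((hcone_nhds.and hcone_nhds_neg).filter_mono
    nhdsWithin_le_nhds).and (self_mem_nhdsWithin (s := Set.Ioi (0 : ℝ)))).exists
  have hvw : dot2 v y = dot2 w y := by
    refine le_antisymm (by simpa only [hy] using hw v hvQ) ?_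
    simpa using hcone_nhds.self_of_nhds w hwQ
  have hww' : dot2 w' y = dot2 w y := by
    simpa only [hy] using le_antisymm (hw w' hw'Q) (hw' w hwQ)
  have hle : (w' - w) ⬝ᵥ (w' - w) ≤ 0 := by
    have h1 := ht w' hw'Q
    have h2 := ht' w hwQ
    simp only [dot2_eq_dotProduct, dotProduct_add, dotProduct_smul, smul_eq_mul]
      at h1 h2 hvw hww'
    rw [sub_dotProduct]
    nlinarith [show 0 < t from ht0]
  exact hne (sub_eq_zero.1 (dotProduct_self_eq_zero.1
    (le_antisymm hle (Finset.sum_nonneg fun _ _ ↦ mul_self_nonneg _)))).symm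

end FanRefines

lemma exists_smul_eq_of_apply_eq_zero {E : Type*} [AddCommGroup E] [TopologicalSpace E]
    [Module ℝ E] (hE : Module.finrank ℝ E = 2) {φ : StrongDual ℝ E} (hφ : φ ≠ 0) {d x : E}
    (hd : d ≠ 0) (hφd : φ d = 0) (hφx : φ x = 0) : ∃ t : ℝ, t • d = x := by
  have : FiniteDimensional ℝ E := Module.finite_of_finrank_eq_succ hE
  have hker : Module.finrank ℝ φ.ker = 1 := by
    have := Module.Dual.finrank_ker_add_one_of_ne_zero (f := φ.toLinearMap)
      fun h ↦ hφ (ContinuousLinearMap.coe_injective h)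
    omega
  obtain ⟨t, ht⟩ := (finrank_eq_one_iff_of_nonzero' (⟨d, hφd⟩ : φ.ker)
    (fun h ↦ hd (congrArg Subtype.val h))).1 hker ⟨x, hφx⟩
  exact ⟨t, congrArg Subtype.val ht⟩

/-- The lattice segment `[s, s + d]` of `P` is parallel to the level line `φ = φ w` of a lattice
point `w` and lies on the side `φ ≤ φ w`, the direction `d` generates the lattice points of
`ker φ`, and the level line meets `P` in no lattice point. -/
structure IsBlockingEdge (P : Set (Fin 2 → ℝ)) (φ : StrongDual ℝ (Fin 2 → ℝ))
    (w d s : Fin 2 → ℝ) : Prop where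
  functional_ne_zero : φ ≠ 0
  dir_ne_zero : d ≠ 0
  isLatticePt_level : IsLatticePt w
  isLatticePt_dir : IsLatticePt d
  isLatticePt_start : IsLatticePt s
  map_dir : φ d = 0
  exists_zsmul_dir : ∀ e, IsLatticePt e → φ e = 0 → ∃ k : ℤ, e = k • d
  start_mem : s ∈ P
  start_add_dir_mem : s + d ∈ P
  map_start_le : φ s ≤ φ w
  map_ne_level : ∀ m ∈ P, IsLatticePt m → φ m ≠ φ w

section TwoEdges

variable {P : Set (Fin 2 → ℝ)} {φ φ₁ φ₂ : StrongDual ℝ (Fin 2 → ℝ)}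
  {w d s d₁ d₂ s₁ s₂ w₁ w₂ : Fin 2 → ℝ}

-- The chord at level `β` is cut out by the segments `[s₁, s₂]` and `[s₁ + d₁, s₂ + d₂]`; `hcmp`
-- says that the lines carrying these segments do not converge with increasing `φ₁`.
lemma exists_long_chord (hP : Convex ℝ P) {β : ℝ} (h₁ : φ₁ d₁ = 0) (h₂ : φ₂ d₂ = 0)
    (hD₁ : 0 < φ₁ d₂) (hD₂ : 0 < φ₂ d₁) (hs₁ : s₁ ∈ P) (hsd₁ : s₁ + d₁ ∈ P) (hs₂ : s₂ ∈ P)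
    (hsd₂ : s₂ + d₂ ∈ P) (hlo : φ₁ s₁ ≤ β) (hhi : β < φ₁ s₂)
    (hcmp : (φ₁ s₂ - φ₁ s₁) * φ₂ d₁ ≤ (φ₂ s₁ - φ₂ s₂) * φ₁ d₂) :
    ∃ y ∈ P, ∃ κ : ℝ, 1 ≤ κ ∧ φ₁ y = β ∧ y + κ • d₁ ∈ P := by
  have hA : 0 < φ₁ s₂ - φ₁ s₁ := by linarith
  obtain ⟨t, ht⟩ : ∃ t, t * (φ₁ s₂ - φ₁ s₁) = β - φ₁ s₁ := ⟨_, div_mul_cancel₀ _ hA.ne'⟩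
  obtain ⟨t', ht'⟩ : ∃ t', t' * (φ₁ s₂ - φ₁ s₁ + φ₁ d₂) = β - φ₁ s₁ :=
    ⟨_, div_mul_cancel₀ _ (by linarith)⟩
  have ht0 : 0 ≤ t := by by_contra!; nlinarith
  have ht'0 : 0 ≤ t' := by by_contra!; nlinarith
  have hyP : s₁ + t • (s₂ - s₁) ∈ P := hP.add_smul_sub_mem hs₁ hs₂ ⟨ht0, by by_contra!; nlinarith⟩
  have hzP : s₁ + d₁ + t' • (s₂ + d₂ - (s₁ + d₁)) ∈ P :=
    hP.add_smul_sub_mem hsd₁ hsd₂ ⟨ht'0, by by_contra!; nlinarith⟩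
  obtain ⟨κ, hκ⟩ := exists_smul_eq_of_apply_eq_zero (by simp) (φ := φ₁) (d := d₁)
    (x := s₁ + d₁ + t' • (s₂ + d₂ - (s₁ + d₁)) - (s₁ + t • (s₂ - s₁)))
    (fun h ↦ by simp [h] at hD₁) (fun h ↦ by simp [h] at hD₂) h₁
    (by simp [h₁]; linarith)
  refine ⟨_, hyP, κ, ?_, by simp; linarith, by rwa [hκ, add_sub_cancel]⟩
  have hκ₂ : κ * φ₂ d₁ = φ₂ d₁ - t' * (φ₂ s₁ - φ₂ s₂ + φ₂ d₁) + t * (φ₂ s₁ - φ₂ s₂) := by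
    rw [← smul_eq_mul, ← map_smul, hκ]; simp [h₂]; ring
  have hslack : (t * (φ₂ s₁ - φ₂ s₂) - t' * (φ₂ s₁ - φ₂ s₂ + φ₂ d₁)) * (φ₁ s₂ - φ₁ s₁) =
      t' * ((φ₂ s₁ - φ₂ s₂) * φ₁ d₂ - (φ₁ s₂ - φ₁ s₁) * φ₂ d₁) := by
    linear_combination (φ₂ s₁ - φ₂ s₂) * (ht - ht')
  have hslack_nonneg : 0 ≤ t * (φ₂ s₁ - φ₂ s₂) - t' * (φ₂ s₁ - φ₂ s₂ + φ₂ d₁) :=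
    nonneg_of_mul_nonneg_left (hslack ▸ mul_nonneg ht'0 (sub_nonneg.2 hcmp)) hA
  exact le_of_mul_le_mul_right (by linarith) hD₂

namespace IsBlockingEdge

lemma flip (h : IsBlockingEdge P φ w d s) : IsBlockingEdge P φ w (-d) (s + d) where
  functional_ne_zero := h.functional_ne_zero
  dir_ne_zero := neg_ne_zero.2 h.dir_ne_zero
  isLatticePt_level := h.isLatticePt_level
  isLatticePt_dir := h.isLatticePt_dir.neg
  isLatticePt_start := h.isLatticePt_start.add h.isLatticePt_dir
  map_dir := by simp [h.map_dir]
  exists_zsmul_dir e he hφe := by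
    obtain ⟨k, rfl⟩ := h.exists_zsmul_dir e he hφe
    exact ⟨-k, by simp⟩
  start_mem := h.start_add_dir_mem
  start_add_dir_mem := by simpa using h.start_mem
  map_start_le := by simpa [h.map_dir] using h.map_start_le
  map_ne_level := h.map_ne_level

lemma exists_dir_nonneg (h : IsBlockingEdge P φ w d s) (ψ : StrongDual ℝ (Fin 2 → ℝ)) :
    ∃ d' s', IsBlockingEdge P φ w d' s' ∧ 0 ≤ ψ d' := by
  obtain hψ | hψ := le_total 0 (ψ d)
  exacts [⟨d, s, h, hψ⟩, ⟨-d, s + d, h.flip, by simpa using hψ⟩]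

lemma add_smul_dir_notMem (hP : Convex ℝ P) (h : IsBlockingEdge P φ w d s) {y : Fin 2 → ℝ}
    (hy : y ∈ P) (hφy : φ y = φ w) {κ : ℝ} (hκ : 1 ≤ κ) : y + κ • d ∉ P := by
  intro hyκ
  obtain ⟨t, ht⟩ := exists_smul_eq_of_apply_eq_zero (by simp) h.functional_ne_zero h.dir_ne_zero
    h.map_dir (x := y - w) (by simp [hφy])
  have hround : ⌈t⌉ - t ≤ κ := by linarith [Int.ceil_lt_add_one t]
  refine h.map_ne_level (w + ⌈t⌉ • d) ?_ (h.isLatticePt_level.add (h.isLatticePt_dir.zsmul _))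
    (by rw [map_add, map_zsmul, h.map_dir, smul_zero, add_zero])
  have hm : w + ⌈t⌉ • d = y + ((⌈t⌉ - t) / κ) • (y + κ • d - y) := by
    rw [add_sub_cancel_left, smul_smul, div_mul_cancel₀ _ (by positivity), sub_smul, ht,
      Int.cast_smul_eq_zsmul]
    abel
  rw [hm]
  exact hP.add_smul_sub_mem hy hyκ
    ⟨div_nonneg (sub_nonneg.2 (Int.le_ceil t)) (by positivity),
      (div_le_one₀ (by positivity)).2 hround⟩

lemma dir_eq_or_eq_neg (h₁ : IsBlockingEdge P φ₁ w₁ d₁ s₁) (h₂ : IsBlockingEdge P φ₂ w₂ d₂ s₂)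
    (hpar : φ₁ d₂ = 0) : d₂ = d₁ ∨ d₂ = -d₁ := by
  obtain ⟨k, rfl⟩ := h₁.exists_zsmul_dir d₂ h₂.isLatticePt_dir hpar
  have hk : k ≠ 0 := fun hk ↦ h₂.dir_ne_zero (by simp [hk])
  have hφ₂ : φ₂ d₁ = 0 := by simpa only [map_zsmul, smul_eq_zero, hk, false_or] using h₂.map_dir
  obtain ⟨l, hl⟩ := h₂.exists_zsmul_dir d₁ h₁.isLatticePt_dir hφ₂
  have hlk : l * k = 1 := by
    refine smul_left_injective ℤ h₁.dir_ne_zero ?_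
    simpa only [mul_smul, one_smul] using hl.symm
  obtain rfl | rfl := Int.isUnit_iff.1 (.of_mul_eq_one_right l hlk)
  exacts [.inl (one_smul ..), .inr (by simp)]

lemma exists_isLatticePt_le_of_same_dir (hP : Convex ℝ P) (h₁ : IsBlockingEdge P φ₁ w₁ d s₁)
    (h₂ : IsBlockingEdge P φ₂ w₂ d s₂) :
    ∃ m ∈ P, IsLatticePt m ∧ φ₁ m ≤ φ₁ w₁ ∧ φ₂ m ≤ φ₂ w₂ := by
  by_contra! hcov
  have hlt : φ₁ w₁ < φ₁ s₂ := lt_of_not_ge fun hle ↦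
    (hcov s₂ h₂.start_mem h₂.isLatticePt_start hle).not_ge h₂.map_start_le
  have hle := h₁.map_start_le
  obtain ⟨t, ht⟩ : ∃ t, t * (φ₁ s₂ - φ₁ s₁) = φ₁ w₁ - φ₁ s₁ :=
    ⟨_, div_mul_cancel₀ _ (by linarith)⟩
  have ht01 : t ∈ Set.Icc 0 1 := ⟨by by_contra!; nlinarith, by by_contra!; nlinarith⟩
  refine h₁.add_smul_dir_notMem hP (hP.add_smul_sub_mem h₁.start_mem h₂.start_mem ht01)
    (by simp; linarith) le_rfl ?_
  convert hP.add_smul_sub_mem h₁.start_add_dir_mem h₂.start_add_dir_mem ht01 using 1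
  module

lemma exists_isLatticePt_le_of_pos (hP : Convex ℝ P) (h₁ : IsBlockingEdge P φ₁ w₁ d₁ s₁)
    (h₂ : IsBlockingEdge P φ₂ w₂ d₂ s₂) (hD₁ : 0 < φ₁ d₂) (hD₂ : 0 < φ₂ d₁) :
    ∃ m ∈ P, IsLatticePt m ∧ φ₁ m ≤ φ₁ w₁ ∧ φ₂ m ≤ φ₂ w₂ := by
  by_contra! hcov
  have hlt₁ : φ₁ w₁ < φ₁ s₂ := lt_of_not_ge fun hle ↦
    (hcov s₂ h₂.start_mem h₂.isLatticePt_start hle).not_ge h₂.map_start_le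
  have hlt₂ : φ₂ w₂ < φ₂ s₁ := hcov s₁ h₁.start_mem h₁.isLatticePt_start h₁.map_start_le
  obtain hcmp | hcmp := le_total ((φ₁ s₂ - φ₁ s₁) * φ₂ d₁) ((φ₂ s₁ - φ₂ s₂) * φ₁ d₂)
  · obtain ⟨y, hy, κ, hκ, hφy, hyκ⟩ := exists_long_chord hP h₁.map_dir h₂.map_dir hD₁ hD₂
      h₁.start_mem h₁.start_add_dir_mem h₂.start_mem h₂.start_add_dir_mem h₁.map_start_le hlt₁ hcmp
    exact h₁.add_smul_dir_notMem hP hy hφy hκ hyκ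
  · obtain ⟨y, hy, κ, hκ, hφy, hyκ⟩ := exists_long_chord hP h₂.map_dir h₁.map_dir hD₂ hD₁
      h₂.start_mem h₂.start_add_dir_mem h₁.start_mem h₁.start_add_dir_mem h₂.map_start_le hlt₂ hcmp
    exact h₂.add_smul_dir_notMem hP hy hφy hκ hyκ

theorem exists_isLatticePt_le (hP : Convex ℝ P) (h₁ : IsBlockingEdge P φ₁ w₁ d₁ s₁)
    (h₂ : IsBlockingEdge P φ₂ w₂ d₂ s₂) :
    ∃ m ∈ P, IsLatticePt m ∧ φ₁ m ≤ φ₁ w₁ ∧ φ₂ m ≤ φ₂ w₂ := by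
  obtain ⟨d₁, s₁, h₁, hD₂⟩ := h₁.exists_dir_nonneg φ₂
  obtain ⟨d₂, s₂, h₂, hD₁⟩ := h₂.exists_dir_nonneg φ₁
  by_cases hpar : φ₁ d₂ = 0
  · obtain rfl | rfl := h₁.dir_eq_or_eq_neg h₂ hpar
    exacts [h₁.exists_isLatticePt_le_of_same_dir hP h₂,
      h₁.flip.exists_isLatticePt_le_of_same_dir hP h₂]
  · have hpar' : φ₂ d₁ ≠ 0 := fun h ↦ hpar <| by
      obtain rfl | rfl := h₂.dir_eq_or_eq_neg h₁ h
      exacts [h₁.map_dir, by simpa using h₁.map_dir]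
    exact h₁.exists_isLatticePt_le_of_pos hP h₂ (hD₁.lt_of_ne' hpar) (hD₂.lt_of_ne' hpar')

end IsBlockingEdge

end TwoEdges

lemma exists_mem_segment_disjoint_openSegment {E : Type*} [AddCommGroup E] [Module ℝ E]
    [TopologicalSpace E] [ContinuousAdd E] [ContinuousSMul ℝ E] {Q : Set E} (hQ : IsClosed Q)
    {c z : E} (hc : c ∈ Q) (hz : z ∉ Q) :
    ∃ y ∈ segment ℝ c z, y ∈ Q ∧ Disjoint Q (openSegment ℝ y z) := by
  let γ : ℝ → E := fun t ↦ c + t • (z - c)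
  have hγ : Continuous γ := by fun_prop
  obtain ⟨t, ⟨ht01, htQ⟩, ht_max⟩ :=
    (isCompact_Icc.inter_right (hQ.preimage hγ)).exists_isGreatest
      (⟨0, by simp, by simpa [γ]⟩ : (Set.Icc (0 : ℝ) 1 ∩ γ ⁻¹' Q).Nonempty)
  have ht1 : t < 1 := ht01.2.lt_of_ne fun h ↦ hz (by simpa [γ, h] using htQ)
  refine ⟨γ t, ?_, htQ, Set.disjoint_left.2 fun x hxQ hx ↦ ?_⟩
  · rw [segment_eq_image']
    exact ⟨t, ht01, rfl⟩
  · rw [openSegment_eq_image'] at hx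
    obtain ⟨r, ⟨hr0, hr1⟩, rfl⟩ := hx
    have hstep : 0 < r * (1 - t) := mul_pos hr0 (by linarith)
    have hle : t + r * (1 - t) ≤ t := ht_max ⟨⟨by linarith [ht01.1], by nlinarith⟩, by
      have heq : γ (t + r * (1 - t)) = γ t + r • (z - γ t) := by
        simp only [γ]
        module
      exact Set.mem_preimage.2 (heq ▸ hxQ)⟩
    linarith

lemma exists_supporting_functional {E : Type*} [NormedAddCommGroup E] [NormedSpace ℝ E]
    [FiniteDimensional ℝ E] {Q : Set E} (hQ : Convex ℝ Q) {y z : E} (hy : y ∈ Q)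
    (hdisj : Disjoint Q (openSegment ℝ y z)) :
    ∃ φ : StrongDual ℝ E, φ ≠ 0 ∧ (∀ q ∈ Q, φ q ≤ φ y) ∧ φ y ≤ φ z := by
  by_cases hinterior : (interior Q).Nonempty
  · obtain ⟨φ, u, hφ, hQu, hu⟩ := geometric_hahn_banach_of_nonempty_interior hQ
      (convex_openSegment y z) (hdisj.mono_left interior_subset) hinterior
      ⟨_, midpoint_mem_openSegment y z⟩
    have hsegment : segment ℝ y z ⊆ {x | u ≤ φ x} :=
      segment_subset_closure_openSegment.trans
        (closure_minimal hu (isClosed_le continuous_const φ.continuous))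
    have huy : u ≤ φ y := hsegment (left_mem_segment ..)
    exact ⟨φ, hφ, fun q hq ↦ (hQu q hq).trans huy,
      (hQu y hy).trans (hsegment (right_mem_segment ..))⟩
  · have hspan : vectorSpan ℝ Q < ⊤ := lt_top_iff_ne_top.2 fun h ↦ hinterior <| by
      rwa [hQ.interior_nonempty_iff_affineSpan_eq_top,
        AffineSubspace.affineSpan_eq_top_iff_vectorSpan_eq_top_of_nonempty ℝ E E ⟨y, hy⟩]
    obtain ⟨f, hf, hle⟩ := Submodule.exists_le_ker_of_lt_top _ hspan
    let φ := LinearMap.toContinuousLinearMap f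
    have hφ : φ ≠ 0 := fun h ↦ hf (by simpa [φ] using h)
    have hφQ (q) (hq : q ∈ Q) : φ q = φ y :=
      sub_eq_zero.1 ((map_sub f q y).symm.trans (hle (vsub_mem_vectorSpan ℝ hq hy)))
    obtain hyz | hyz := le_total (φ y) (φ z)
    · exact ⟨φ, hφ, fun q hq ↦ (hφQ q hq).le, hyz⟩
    · exact ⟨-φ, neg_ne_zero.2 hφ, fun q hq ↦ neg_le_neg (hφQ q hq).ge, neg_le_neg hyz⟩

section BlockingEdgeExists

variable {P Q : Set (Fin 2 → ℝ)} {φ : StrongDual ℝ (Fin 2 → ℝ)}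

lemma IsLatticePolytope.exists_generating_edge (hP : IsLatticePolytope P) (hφ : φ ≠ 0)
    (hF : (φ.toExposed P).Nontrivial) :
    ∃ s d, IsLatticePt s ∧ IsLatticePt d ∧ d ≠ 0 ∧ φ d = 0 ∧
      (∀ e, IsLatticePt e → φ e = 0 → ∃ k : ℤ, e = k • d) ∧ s ∈ φ.toExposed P ∧ s + d ∈ P := by
  have hexp : IsExposed ℝ P (φ.toExposed P) := ContinuousLinearMap.toExposed.isExposed
  obtain ⟨a, ha, b, hb, hab, halat, hblat⟩ :=
    hP.exists_ne_isLatticePt_of_isExtreme hexp.isExtreme (hexp.isCompact hP.isCompact) hF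
  have hba : b - a ≠ 0 := sub_ne_zero.2 hab.symm
  have hφba : φ (b - a) = 0 := by rw [map_sub, (ha.2 b hb.1).antisymm (hb.2 a ha.1), sub_self]
  obtain ⟨c, hc0, hc1, hclat, hc⟩ := (hblat.sub halat).exists_primitive_smul hba
  refine ⟨a, c • (b - a), halat, hclat, smul_ne_zero hc0.ne' hba, by simp [hφba], ?_, ha,
    hP.convex.add_smul_sub_mem ha.1 hb.1 ⟨hc0.le, hc1⟩⟩
  intro e he hφe
  obtain ⟨t, rfl⟩ := exists_smul_eq_of_apply_eq_zero (by simp) hφ hba hφba hφe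
  obtain ⟨k, rfl⟩ := hc t he
  exact ⟨k, by rw [mul_smul, Int.cast_smul_eq_zsmul]⟩

-- Otherwise `[y, x]` would leave the face of `Q` exposed by `φ` through an endpoint of that face, a
-- lattice point of `P ∩ Q`.
lemma mem_of_apply_eq_of_lattice_free (hP : Convex ℝ P) (hQ : IsLatticePolytope Q)
    (hfree : ∀ m ∈ P, m ∈ Q → ¬IsLatticePt m) (hφ : φ ≠ 0) {y : Fin 2 → ℝ} (hyP : y ∈ P)
    (hyF : y ∈ φ.toExposed Q) {x : Fin 2 → ℝ} (hxP : x ∈ P) (hφx : φ x = φ y) : x ∈ Q := by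
  have hexp : IsExposed ℝ Q (φ.toExposed Q) := ContinuousLinearMap.toExposed.isExposed
  have hFc : IsCompact (φ.toExposed Q) := hexp.isCompact hQ.isCompact
  by_contra hxQ
  obtain ⟨ψ, u, hψF, hψx⟩ := geometric_hahn_banach_closed_point (hexp.convex hQ.convex)
    hFc.isClosed (mt And.left hxQ)
  have hexpψ : IsExposed ℝ (φ.toExposed Q) (ψ.toExposed (φ.toExposed Q)) :=
    ContinuousLinearMap.toExposed.isExposed
  obtain ⟨e, ⟨heF, he_max⟩, he⟩ := hQ.exists_isLatticePt_of_isExtreme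
    (hexp.isExtreme.trans hexpψ.isExtreme) (hexpψ.isCompact hFc)
    (toExposed_nonempty_of_isCompact hFc ⟨y, hyF⟩ ψ)
  have hyx : ψ y < ψ x := (hψF y hyF).trans hψx
  obtain ⟨t, ht⟩ := exists_smul_eq_of_apply_eq_zero (by simp) hφ (d := x - y) (x := e - y)
    (sub_ne_zero.2 fun h ↦ hyx.ne (by rw [h])) (by simp [hφx])
    (by rw [map_sub, (hyF.2 e heF.1).antisymm (heF.2 y hyF.1), sub_self])
  have hψt : t * (ψ x - ψ y) = ψ e - ψ y := by
    rw [← map_sub, ← map_sub, ← ht, map_smul, smul_eq_mul]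
  have ht0 : 0 ≤ t := by by_contra!; nlinarith [he_max y hyF]
  have ht1 : t ≤ 1 := by by_contra!; nlinarith [hψF e heF]
  have heq : y + t • (x - y) = e := by rw [ht, add_sub_cancel]
  exact hfree e (heq ▸ hP.add_smul_sub_mem hyP hxP ⟨ht0, ht1⟩) heF.1 he

theorem exists_isBlockingEdge (hP : IsLatticePolytope P) (hQ : IsLatticePolytope Q)
    (hface : ∀ φ : StrongDual ℝ (Fin 2 → ℝ),
      (φ.toExposed Q).Nontrivial → ((-φ).toExposed P).Nontrivial)
    (hfree : ∀ m ∈ P, m ∈ Q → ¬IsLatticePt m) {c z : Fin 2 → ℝ} (hcP : c ∈ P) (hcQ : c ∈ Q)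
    (hzP : z ∈ P) (hz : IsLatticePt z) :
    ∃ φ w d s, IsBlockingEdge P φ w d s ∧ (∀ q ∈ Q, φ q ≤ φ w) ∧ φ w < φ z := by
  have hzQ : z ∉ Q := fun hzQ ↦ hfree z hzP hzQ hz
  obtain ⟨y, hyseg, hyQ, hdisj⟩ :=
    exists_mem_segment_disjoint_openSegment hQ.isCompact.isClosed hcQ hzQ
  have hyP : y ∈ P := hP.convex.segment_subset hcP hzP hyseg
  obtain ⟨φ, hφ, hφQ, hφz⟩ := exists_supporting_functional hQ.convex hyQ hdisj
  have hmemQ {x} (hxP : x ∈ P) (hφx : φ x = φ y) : x ∈ Q :=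
    mem_of_apply_eq_of_lattice_free hP.convex hQ hfree hφ hyP ⟨hyQ, hφQ⟩ hxP hφx
  obtain ⟨w, hwF, hw⟩ := hQ.exists_isLatticePt_mem_toExposed φ
  have hwy : φ w = φ y := (hφQ w hwF.1).antisymm (hwF.2 y hyQ)
  have hnontrivial : (φ.toExposed Q).Nontrivial :=
    ⟨y, ⟨hyQ, hφQ⟩, w, hwF, fun h ↦ hfree y hyP hyQ (h ▸ hw)⟩
  obtain ⟨s, d, hs, hd, hd0, hφd, hgen, hsF, hsdP⟩ :=
    hP.exists_generating_edge (neg_ne_zero.2 hφ) (hface φ hnontrivial)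
  have hφs : φ s ≤ φ c := by simpa using hsF.2 c hcP
  refine ⟨φ, w, d, s, ⟨hφ, hd0, hw, hd, hs, by simpa using hφd, fun e he hφe ↦ hgen e he (by simpa),
    hsF.1, hsdP, (hφs.trans (hφQ c hcQ)).trans_eq hwy.symm, fun m hmP hm hφm ↦
      hfree m hmP (hmemQ hmP (hφm.trans hwy)) hm⟩, hwy ▸ hφQ, ?_⟩
  exact hwy ▸ hφz.lt_of_ne fun h ↦ hzQ (hmemQ hzP h.symm)

end BlockingEdgeExists

lemma exists_lattice_subcover_card_le {d : ℕ} {A : Set (Fin d → ℝ)} (hA : Convex ℝ A)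
    (hbdd : Bornology.IsBounded A) (φ : (Fin d → ℝ) → StrongDual ℝ (Fin d → ℝ)) :
    ∃ J : Finset (Fin d → ℝ), J.card ≤ 2 ^ d ∧ (∀ i ∈ J, IsLatticePt i) ∧
      ∀ z ∈ A, IsLatticePt z → ∃ i ∈ J, φ i i ≤ φ i z := by
  let S := (IsLatticePt.finite_of_isBounded hbdd).toFinset
  have hS {z} : z ∈ S ↔ z ∈ A ∧ IsLatticePt z := Set.Finite.mem_toFinset _
  have hmid : ∀ T ⊆ S, 2 ^ d < T.card → ∃ x ∈ T, ∃ y ∈ T, x ≠ y ∧ midpoint ℝ x y ∈ S := by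
    intro T hTS hT
    obtain ⟨x, hx, y, hy, hxy, hlat⟩ :=
      IsLatticePt.exists_midpoint_of_card_lt (fun x hx ↦ (hS.1 (hTS hx)).2) hT
    exact ⟨x, hx, y, hy, hxy,
      hS.2 ⟨hA.midpoint_mem (hS.1 (hTS hx)).1 (hS.1 (hTS hy)).1, hlat⟩⟩
  obtain ⟨J, hJS, hcard, hcov⟩ := exists_subcover_card_le hmid (I := S)
    (φ := fun i ↦ (φ i).toLinearMap) (b := fun i ↦ φ i i) fun z hz ↦ ⟨z, hz, le_rfl⟩
  exact ⟨J, hcard, fun i hi ↦ (hS.1 (hJS hi)).2, fun z hzA hz ↦ hcov z (hS.2 ⟨hzA, hz⟩)⟩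

lemma one_lt_card_of_cover {α ι : Type*} {J : Finset ι} {T : Set α} {r : ι → α → Prop}
    (hT : T.Nonempty) (hcov : ∀ t ∈ T, ∃ i ∈ J, r i t) (hsingle : ∀ i ∈ J, ∃ t ∈ T, ¬r i t) :
    1 < J.card := by
  obtain ⟨t, ht⟩ := hT
  obtain ⟨i, hi, -⟩ := hcov t ht
  obtain ⟨t', ht', hit'⟩ := hsingle i hi
  obtain ⟨i', hi', hi't'⟩ := hcov t' ht'
  exact Finset.one_lt_card.2 ⟨i, hi, i', hi', fun h ↦ hit' (h ▸ hi't')⟩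

lemma exists_pair_cover_of_card_le_four {α ι : Type*} {J : Finset ι} (hJ : J.card ≤ 4)
    {p : ι → Prop} {T₁ T₂ : Set α} {r : ι → α → Prop} (hT₁ : T₁.Nonempty) (hT₂ : T₂.Nonempty)
    (hcov : ∀ t ∈ T₁ ∪ T₂, ∃ i ∈ J, r i t)
    (hp : ∀ i ∈ J, p i → (∀ t ∈ T₂, ¬r i t) ∧ ∃ t ∈ T₁, ¬r i t)
    (hnp : ∀ i ∈ J, ¬p i → (∀ t ∈ T₁, ¬r i t) ∧ ∃ t ∈ T₂, ¬r i t) :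
    ∃ i ∈ J, ∃ j ∈ J, p i ∧ p j ∧ ∀ t ∈ T₁, r i t ∨ r j t := by
  classical
  have hcov₁ : ∀ t ∈ T₁, ∃ i ∈ J.filter p, r i t := fun t ht ↦ by
    obtain ⟨i, hi, hit⟩ := hcov t (.inl ht)
    exact ⟨i, Finset.mem_filter.2 ⟨hi, of_not_not fun h ↦ (hnp i hi h).1 t ht hit⟩, hit⟩
  have hcov₂ : ∀ t ∈ T₂, ∃ i ∈ J.filter (¬p ·), r i t := fun t ht ↦ by
    obtain ⟨i, hi, hit⟩ := hcov t (.inr ht)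
    exact ⟨i, Finset.mem_filter.2 ⟨hi, fun h ↦ (hp i hi h).1 t ht hit⟩, hit⟩
  have hcard₁ : 1 < (J.filter p).card := one_lt_card_of_cover hT₁ hcov₁ fun i hi ↦
    (hp i (Finset.mem_filter.1 hi).1 (Finset.mem_filter.1 hi).2).2
  have hcard₂ : 1 < (J.filter (¬p ·)).card := one_lt_card_of_cover hT₂ hcov₂ fun i hi ↦
    (hnp i (Finset.mem_filter.1 hi).1 (Finset.mem_filter.1 hi).2).2
  have hsum := J.card_filter_add_card_filter_not p
  obtain ⟨i, j, -, hij⟩ := Finset.card_eq_two.1 (by omega : (J.filter p).card = 2)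
  obtain ⟨hiJ, hi⟩ := Finset.mem_filter.1 (by simp [hij] : i ∈ J.filter p)
  obtain ⟨hjJ, hj⟩ := Finset.mem_filter.1 (by simp [hij] : j ∈ J.filter p)
  exact ⟨i, hiJ, j, hjJ, hi, hj, fun t ht ↦ by simpa [hij] using hcov₁ t ht⟩

section LatticeIntersection

variable {P Q : Set (Fin 2 → ℝ)}

lemma exists_cutting_functional (hP : IsLatticePolytope P) (hQ : IsLatticePolytope Q)
    (hface : ∀ φ : StrongDual ℝ (Fin 2 → ℝ),
      (φ.toExposed Q).Nontrivial → ((-φ).toExposed P).Nontrivial)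
    (hfree : ∀ m ∈ P, m ∈ Q → ¬IsLatticePt m) (hPQ : (P ∩ Q).Nonempty) {z : Fin 2 → ℝ}
    (hz : IsLatticePt z) :
    ∃ φ : StrongDual ℝ (Fin 2 → ℝ),
      (z ∈ P → ∃ w d s, IsBlockingEdge P φ w d s ∧ (∀ q ∈ Q, φ q ≤ φ w) ∧ φ w < φ z) ∧
      (z ∉ P → ∀ p ∈ P, φ p < φ z) := by
  obtain ⟨c, hcP, hcQ⟩ := hPQ
  by_cases hzP : z ∈ P
  · obtain ⟨φ, h⟩ := exists_isBlockingEdge hP hQ hface hfree hcP hcQ hzP hz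
    exact ⟨φ, fun _ ↦ h, fun h ↦ absurd hzP h⟩
  · obtain ⟨φ, u, hφ, hu⟩ := geometric_hahn_banach_closed_point hP.convex
      hP.isCompact.isClosed hzP
    exact ⟨φ, fun h ↦ absurd h hzP, fun _ p hp ↦ (hφ p hp).trans hu⟩

theorem exists_isLatticePt_mem_inter (hP : IsLatticePolytope P) (hQ : IsLatticePolytope Q)
    (hface : ∀ φ : StrongDual ℝ (Fin 2 → ℝ),
      (φ.toExposed Q).Nontrivial → ((-φ).toExposed P).Nontrivial)
    (hPQ : (P ∩ Q).Nonempty) : ∃ m ∈ P, m ∈ Q ∧ IsLatticePt m := by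
  by_contra! hfree
  have hcut z (hz : IsLatticePt z) := exists_cutting_functional hP hQ hface hfree hPQ hz
  choose! φ hin hout using hcut
  obtain ⟨J, hJcard, hJ, hcov⟩ := exists_lattice_subcover_card_le (convex_convexHull ℝ (P ∪ Q))
    (isBounded_convexHull.2 (hP.isCompact.union hQ.isCompact).isBounded) φ
  let TP := {m ∈ P | IsLatticePt m}
  let TQ := {m ∈ Q | IsLatticePt m}
  have hTP : TP.Nonempty := (hP.exists_isLatticePt_mem_toExposed 0).imp fun p hp ↦ ⟨hp.1.1, hp.2⟩
  have hTQ : TQ.Nonempty := (hQ.exists_isLatticePt_mem_toExposed 0).imp fun q hq ↦ ⟨hq.1.1, hq.2⟩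
  have hcovT : ∀ m ∈ TP ∪ TQ, ∃ i ∈ J, φ i i ≤ φ i m := fun m hm ↦
    hcov m (subset_convexHull ℝ _ (hm.imp And.left And.left)) (hm.elim And.right And.right)
  have hin_cut : ∀ i ∈ J, i ∈ P →
      (∀ m ∈ TQ, ¬φ i i ≤ φ i m) ∧ ∃ m ∈ TP, ¬φ i i ≤ φ i m := fun i hi hiP ↦ by
    obtain ⟨w, d, s, hedge, hφQ, hlt⟩ := hin i (hJ i hi) hiP
    exact ⟨fun m hm ↦ ((hφQ m hm.1).trans_lt hlt).not_ge,
      s, ⟨hedge.start_mem, hedge.isLatticePt_start⟩, (hedge.map_start_le.trans_lt hlt).not_ge⟩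
  have hout_cut : ∀ i ∈ J, i ∉ P →
      (∀ m ∈ TP, ¬φ i i ≤ φ i m) ∧ ∃ m ∈ TQ, ¬φ i i ≤ φ i m := fun i hi hiP ↦ by
    obtain ⟨c, hcP, hcQ⟩ := hPQ
    obtain ⟨e, he, helat⟩ := hQ.exists_isLatticePt_mem_toExposed (-φ i)
    have hec : φ i e ≤ φ i c := by simpa using he.2 c hcQ
    have hφP := hout i (hJ i hi) hiP
    exact ⟨fun m hm ↦ (hφP m hm.1).not_ge, e, ⟨he.1, helat⟩, (hec.trans_lt (hφP c hcP)).not_ge⟩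
  obtain ⟨i, hi, j, hj, hiP, hjP, hij⟩ :=
    exists_pair_cover_of_card_le_four hJcard hTP hTQ hcovT hin_cut hout_cut
  obtain ⟨w, d, s, hedge, -, hlt⟩ := hin i (hJ i hi) hiP
  obtain ⟨w', d', s', hedge', -, hlt'⟩ := hin j (hJ j hj) hjP
  obtain ⟨m, hmP, hm, hle, hle'⟩ := hedge.exists_isLatticePt_le hP.convex hedge'
  exact (hij m ⟨hmP, hm⟩).elim (hle.trans_lt hlt).not_ge (hle'.trans_lt hlt').not_ge

end LatticeIntersection

lemma toExposed_singleton_sub {E : Type*} [TopologicalSpace E] [AddCommGroup E]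
    [IsTopologicalAddGroup E] [Module ℝ E] [ContinuousSMul ℝ E] (φ : StrongDual ℝ E) (x : E)
    (Q : Set E) :
    φ.toExposed ({x} - Q) = {x} - (-φ).toExposed Q := by
  ext p
  simp only [Set.singleton_sub, Set.mem_image, ContinuousLinearMap.toExposed,
    Set.mem_ofPred_eq, forall_exists_index, and_imp, forall_apply_eq_imp_iff₂, map_sub,
    neg_apply, neg_le_neg_iff]
  constructor
  · rintro ⟨⟨q, hq, rfl⟩, hmax⟩
    exact ⟨q, ⟨hq, fun y hy ↦ by linarith [hmax y hy, map_sub φ x q, map_sub φ x y]⟩, rfl⟩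
  · rintro ⟨q, ⟨hq, hmax⟩, rfl⟩
    exact ⟨⟨q, hq, rfl⟩, fun y hy ↦ by linarith [hmax y hy, map_sub φ x q, map_sub φ x y]⟩

namespace FanRefines

variable {P Q : Set (Fin 2 → ℝ)} {x : Fin 2 → ℝ}

theorem exists_isLatticePt_add_eq (h : FanRefines P Q) (hP : IsLatticePolytope P)
    (hQ : IsLatticePolytope Q) (hx : IsLatticePt x) (hxPQ : x ∈ P + Q) :
    ∃ p ∈ P, ∃ q ∈ Q, IsLatticePt p ∧ IsLatticePt q ∧ p + q = x := by
  obtain ⟨p, hp, q, hq, rfl⟩ := hxPQ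
  have hface (φ : StrongDual ℝ (Fin 2 → ℝ)) (hφ : (φ.toExposed ({p + q} - Q)).Nontrivial) :
      ((-φ).toExposed P).Nontrivial := by
    rw [toExposed_singleton_sub, Set.singleton_sub] at hφ
    exact h.nontrivial_toExposed hP (Set.nontrivial_of_image _ _ hφ)
  obtain ⟨m, hmP, hmQ, hm⟩ :=
    exists_isLatticePt_mem_inter hP ((IsLatticePolytope.singleton hx).sub hQ) hface
      ⟨p, hp, p + q, rfl, q, hq, add_sub_cancel_right p q⟩
  obtain ⟨_, rfl, r, hr, rfl⟩ := hmQ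
  exact ⟨_, hmP, r, hr, hm, by simpa using hx.sub hm, sub_add_cancel ..⟩

theorem exists_isLatticePt_add_sum_eq (h : FanRefines P Q) (hP : IsLatticePolytope P)
    (hQ : IsLatticePolytope Q) (hx : IsLatticePt x) {n : ℕ} (hxPQ : x ∈ P + (n : ℝ) • Q) :
    ∃ p ∈ P, IsLatticePt p ∧ ∃ f : Fin n → Fin 2 → ℝ,
      (∀ i, f i ∈ Q ∧ IsLatticePt (f i)) ∧ x = p + ∑ i, f i := by
  induction n generalizing x with
  | zero =>
    rw [Nat.cast_zero, Set.zero_smul_set hQ.nonempty, add_zero] at hxPQ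
    exact ⟨x, hxPQ, hx, Fin.elim0, fun i ↦ i.elim0, by simp⟩
  | succ n ih =>
    rw [Nat.cast_succ, hQ.convex.add_smul n.cast_nonneg zero_le_one, one_smul, ← add_assoc] at hxPQ
    obtain ⟨y, hy, q, hq, hylat, hqlat, rfl⟩ := (h.add_right _).exists_isLatticePt_add_eq
      (hP.add (hQ.natCast_smul n)) hQ hx hxPQ
    obtain ⟨p, hp, hplat, f, hf, rfl⟩ := ih hylat hy
    exact ⟨p, hp, hplat, Fin.snoc f q,
      Fin.lastCases (by simpa using ⟨hq, hqlat⟩) (by simpa using hf),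
      by simp [Fin.sum_univ_castSucc, add_assoc]⟩

end FanRefines

section Decomposition

variable {P Q : Set (Fin 2 → ℝ)} {x : Fin 2 → ℝ}

theorem IsLatticePolytope.exists_sum_eq (hP : IsLatticePolytope P) (hx : IsLatticePt x) {n : ℕ}
    (hxP : x ∈ (n : ℝ) • P) :
    ∃ f : Fin n → Fin 2 → ℝ, (∀ i, f i ∈ P ∧ IsLatticePt (f i)) ∧ x = ∑ i, f i := by
  cases n with
  | zero =>
    rw [Nat.cast_zero, Set.zero_smul_set hP.nonempty] at hxP
    exact ⟨Fin.elim0, fun i ↦ i.elim0, by simpa using hxP⟩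
  | succ n =>
    rw [Nat.cast_succ, hP.convex.add_smul n.cast_nonneg zero_le_one, one_smul, add_comm] at hxP
    obtain ⟨p, hp, hplat, f, hf, rfl⟩ :=
      (FanRefines.refl P).exists_isLatticePt_add_sum_eq hP hP hx hxP
    exact ⟨Fin.cons p f, Fin.cases ⟨hp, hplat⟩ hf, by simp [Fin.sum_univ_succ]⟩

theorem FanRefines.exists_sum_add_sum_eq (h : FanRefines P Q) (hP : IsLatticePolytope P)
    (hQ : IsLatticePolytope Q) (hx : IsLatticePt x) {k j : ℕ}
    (hxPQ : x ∈ (k : ℝ) • P + (j : ℝ) • Q) :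
    ∃ (f : Fin j → Fin 2 → ℝ) (g : Fin k → Fin 2 → ℝ), (∀ i, f i ∈ Q ∧ IsLatticePt (f i)) ∧
      (∀ i, g i ∈ P ∧ IsLatticePt (g i)) ∧ x = ∑ i, f i + ∑ i, g i := by
  obtain rfl | hk := k.eq_zero_or_pos
  · rw [Nat.cast_zero, Set.zero_smul_set hP.nonempty, zero_add] at hxPQ
    obtain ⟨f, hf, rfl⟩ := hQ.exists_sum_eq hx hxPQ
    exact ⟨f, Fin.elim0, hf, fun i ↦ i.elim0, by simp⟩
  · have hkPQ : FanRefines ((k : ℝ) • P) Q := h.smul_left (Nat.cast_pos.2 hk)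
    obtain ⟨p, hp, hplat, f, hf, rfl⟩ :=
      hkPQ.exists_isLatticePt_add_sum_eq (hP.natCast_smul k) hQ hx hxPQ
    obtain ⟨g, hg, rfl⟩ := hP.exists_sum_eq hplat hp
    exact ⟨f, g, hf, hg, add_comm ..⟩

end Decomposition

section Cayley

/-- The embedding `emb` as a linear map, which makes images of convex sets and of sums under
`emb` available. -/
def embLinear : (Fin 2 → ℝ) × ℝ →ₗ[ℝ] Fin 3 → ℝ where
  toFun v := emb v.1 v.2
  map_add' u v := by ext i; fin_cases i <;> rfl
  map_smul' c v := by ext i; fin_cases i <;> rfl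

lemma emb_eq_embLinear (v : Fin 2 → ℝ) (t : ℝ) : emb v t = embLinear (v, t) := rfl

lemma emb_add_emb (u v : Fin 2 → ℝ) (s t : ℝ) : emb u s + emb v t = emb (u + v) (s + t) :=
  (map_add embLinear (u, s) (v, t)).symm

lemma sum_emb {ι : Type*} (s : Finset ι) (f : ι → Fin 2 → ℝ) (t : ℝ) :
    ∑ i ∈ s, emb (f i) t = emb (∑ i ∈ s, f i) (s.card * t) := by
  simp only [emb_eq_embLinear, ← map_sum]
  congr 1
  ext <;> simp [Prod.fst_sum, Prod.snd_sum]

variable {F G : Set (Fin 2 → ℝ)} {u : Fin 2 → ℝ} {t : ℝ} {x : Fin 3 → ℝ}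

lemma convex_image_emb (hF : Convex ℝ F) (t : ℝ) : Convex ℝ ((fun v ↦ emb v t) '' F) := by
  have himage : (fun v ↦ emb v t) '' F = embLinear '' (F ×ˢ {t}) := by
    rw [Set.prod_singleton, Set.image_image]
    rfl
  exact himage ▸ (hF.prod (convex_singleton t)).linear_image embLinear

lemma IsLatticePt.of_emb (h : IsLatticePt (emb u t)) : IsLatticePt u :=
  Fin.forall_fin_two.2 ⟨h 0, h 1⟩

lemma exists_eq_emb_of_mem_cayley (hF : Convex ℝ F) (hG : Convex ℝ G) (hFne : F.Nonempty)
    (hGne : G.Nonempty) (hx : x ∈ cayley F G) :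
    ∃ a ∈ F, ∃ b ∈ G, x = emb ((1 - x 2) • a + x 2 • b) (x 2) := by
  rw [cayley, convexHull_union (hFne.image _) (hGne.image _), (convex_image_emb hF 0).convexHull_eq,
    (convex_image_emb hG 1).convexHull_eq, mem_convexJoin] at hx
  obtain ⟨_, ⟨a, ha, rfl⟩, _, ⟨b, hb, rfl⟩, hx⟩ := hx
  rw [segment_eq_image] at hx
  obtain ⟨t, -, rfl⟩ := hx
  exact ⟨a, ha, b, hb, by ext i; fin_cases i <;> simp [emb]⟩

lemma exists_eq_emb_of_mem_smul_cayley (hF : Convex ℝ F) (hG : Convex ℝ G) (hFne : F.Nonempty)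
    (hGne : G.Nonempty) {c : ℝ} (hx : x ∈ c • cayley F G) :
    ∃ u ∈ (c - x 2) • F + x 2 • G, x = emb u (x 2) := by
  obtain ⟨y, hy, rfl⟩ := hx
  obtain ⟨a, ha, b, hb, hyab⟩ := exists_eq_emb_of_mem_cayley hF hG hFne hGne hy
  refine ⟨_, Set.add_mem_add (Set.smul_mem_smul_set ha) (Set.smul_mem_smul_set hb), ?_⟩
  conv_lhs => rw [hyab]
  ext i; fin_cases i <;> simp [emb] <;> ring

end Cayley

theorem stmt10_general {Q₀ Q₁ : Set (Fin 2 → ℝ)} (h0 : IsLatticePolytope Q₀)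
    (h1 : IsLatticePolytope Q₁) (href : FanRefines Q₀ Q₁) {n j : ℕ} (hj : j ≤ n)
    {x : Fin 3 → ℝ} (hx : x ∈ (n : ℝ) • cayley Q₀ Q₁) (hxint : IsLatticePt x)
    (hht : x 2 = (j : ℝ)) :
    ∃ (f : Fin j → (Fin 2 → ℝ)) (g : Fin (n - j) → (Fin 2 → ℝ)),
      (∀ i, f i ∈ Q₁ ∧ IsLatticePt (f i)) ∧
      (∀ i, g i ∈ Q₀ ∧ IsLatticePt (g i)) ∧
      x = (∑ i, emb (f i) 1) + ∑ i, emb (g i) 0 := by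
  obtain ⟨u, hu, hxu⟩ :=
    exists_eq_emb_of_mem_smul_cayley h0.convex h1.convex h0.nonempty h1.nonempty hx
  rw [hht] at hu hxu
  rw [← Nat.cast_sub hj] at hu
  subst hxu
  obtain ⟨f, g, hf, hg, rfl⟩ := href.exists_sum_add_sum_eq h0 h1 hxint.of_emb hu
  exact ⟨f, g, hf, hg, by simp [sum_emb, emb_add_emb]⟩

/-- Lattice points of dilates of a Cayley polytope split level-wise. -/
theorem stmt10 (Q₀ Q₁ : Set (Fin 2 → ℝ))
    (h0 : IsLatticePolytope Q₀) (h1 : IsLatticePolytope Q₁)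
    (h0dim : (interior Q₀).Nonempty) (h0sm : IsSmoothPolygon Q₀)
    (href : FanRefines Q₀ Q₁) (hsub : Q₁ ⊆ Q₀)
    (n : ℕ) (hn : 1 ≤ n) (j : ℕ) (hj : j ≤ n)
    (x : Fin 3 → ℝ) (hx : x ∈ (n : ℝ) • cayley Q₀ Q₁) (hxint : IsLatticePt x)
    (hht : x 2 = (j : ℝ)) :
    ∃ (f : Fin j → (Fin 2 → ℝ)) (g : Fin (n - j) → (Fin 2 → ℝ)),
      (∀ i, f i ∈ Q₁ ∧ IsLatticePt (f i)) ∧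
      (∀ i, g i ∈ Q₀ ∧ IsLatticePt (g i)) ∧
      x = (∑ i, emb (f i) 1) + ∑ i, emb (g i) 0 :=
  stmt10_general h0 h1 href hj hx hxint hht
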